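/- Fix a real number c with 0 ≤ c < 1, and let (ξ∨, η∨) be the unique solution with ξ∨ ∈ I = (ξ_min, ξ_max) of the system ψ(1/2, ξ, η) = 0 and ∂ψ/∂t(1/2, ξ, η) = 0, so that g₁(ξ∨) = 0 and η∨ = (27ξ∨² + 10cξ∨ + 3c² − 40)/(8√(1−c²)). Suppose ξ̄ and η̄ are real numbers with ξ∨ < ξ̄ ≤ (4−c)/3, η̄ ≤ η∨, and c·ξ̄ + √(1−c²)·η̄ > c·ξ∨ + √(1−c²)·η∨. Then ψ(1/2, ξ̄, η̄) > 0; in particular, (ξ̄, η̄) does not induce an inner approximant. -/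

import Mathlib

/-- Simplified radial error of the cubic G⁰ Bézier approximant of the unit circular arc. -/
noncomputable def psiC (c t ξ η : ℝ) : ℝ :=
  (1/16) * (t^2 - 1) *
    ((3*η - Real.sqrt (1 - c^2))^2*t^4
      + (16*(1 - c^2) - 9*(η + Real.sqrt (1 - c^2))^2 + 9*(ξ - c)^2)*t^2
      + (16 - (3*ξ + c)^2))

noncomputable def g1 (c ξ : ℝ) : ℝ :=
  2187*ξ^3 + 3807*c*ξ^2 + (1953*c^2 - 3840)*ξ + 245*c^3 - 4352*c

noncomputable def ximin (c : ℝ) : ℝ := (-5*c + 8*Real.sqrt 2*Real.sqrt (9 - c^2))/27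

noncomputable def ximax (c : ℝ) : ℝ := (4 - c)/3

/-- If `(ξ̄, η̄)` lies in the critical triangle beyond the optimal solution, then
`ψ(1/2, ξ̄, η̄) > 0`, so `(ξ̄, η̄)` does not induce an inner approximant. -/
theorem stmt_13 (c : ℝ) (hc0 : 0 ≤ c) (hc1 : c < 1)
    (ξv ηv : ℝ) (hmem : ξv ∈ Set.Ioo (ximin c) (ximax c))
    (hg1 : g1 c ξv = 0)
    (hηv : ηv = (27*ξv^2 + 10*c*ξv + 3*c^2 - 40)/(8*Real.sqrt (1 - c^2)))
    (hsys0 : psiC c (1/2) ξv ηv = 0)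
    (hsys1 : deriv (fun t => psiC c t ξv ηv) (1/2) = 0)
    (ξb ηb : ℝ) (hξb1 : ξv < ξb) (hξb2 : ξb ≤ (4 - c)/3) (hηb : ηb ≤ ηv)
    (hline : c*ξv + Real.sqrt (1 - c^2)*ηv < c*ξb + Real.sqrt (1 - c^2)*ηb) :
    0 < psiC c (1/2) ξb ηb ∧
    ¬ (∀ t ∈ Set.Icc (-1 : ℝ) 1, psiC c t ξb ηb ≤ 0) := by
  have hcs : 0 < 1 - c^2 := by nlinarith
  obtain ⟨hm1, hm2⟩ := hmem
  unfold ximin at hm1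
  unfold ximax at hm2
  have h2 : 1 ≤ Real.sqrt 2 := by
    rw [Real.one_le_sqrt]; norm_num
  have h9 : 1 ≤ Real.sqrt (9 - c^2) := by
    rw [Real.one_le_sqrt]; nlinarith
  have hξ0 : 0 < ξv := by nlinarith
  have hs : 0 < Real.sqrt (1 - c^2) := Real.sqrt_pos.mpr hcs
  have hs2 : Real.sqrt (1 - c^2)^2 = 1 - c^2 := Real.sq_sqrt hcs.le
  unfold psiC at hsys0
  have key : 0 < psiC c (1/2) ξb ηb := by
    unfold psiC
    generalize Real.sqrt (1 - c^2) = s at *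
    have hη8 : 8 * (s * ηv) = 27*ξv^2 + 10*c*ξv + 3*c^2 - 40 := by
      rw [hηv]; field_simp
    have hup : s * ηv ≤ (1-c)*(3-c)/3 := by
      have h1 : ξv^2 ≤ ((4-c)/3)^2 := by gcongr
      have h3 : c*ξv ≤ c*((4-c)/3) := by gcongr
      nlinarith
    have hA : 54*c*(s*ηv) ≤ s^2*(216*ξv+90*c) := by
      have e1 : 54*c*(s*ηv) ≤ 54*c*((1-c)*(3-c)/3) := by gcongr
      have e2 : 18*c*(3-c) ≤ (1+c)*(216*ξv+90*c) := by
        nlinarith [mul_nonneg hc0 hξ0.le, mul_nonneg hc0 hc0]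
      have e3 := mul_le_mul_of_nonneg_left e2 (sub_nonneg.mpr hc1.le)
      rw [hs2]; nlinarith
    have hB : c*(54*ηv+78*s) ≤ s*(216*ξv+168*c) := by
      have : s*(c*(54*ηv+78*s)) ≤ s*(s*(216*ξv+168*c)) := by nlinarith
      exact le_of_mul_le_mul_left this hs
    obtain ⟨a, rfl⟩ : ∃ a, ξb = ξv + a := ⟨ξb - ξv, by ring⟩
    obtain ⟨b, rfl⟩ : ∃ b, ηb = ηv - b := ⟨ηv - ηb, by ring⟩
    have ha : 0 < a := by linarith
    have hb : 0 ≤ b := by linarith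
    have hl : s*b < c*a := by nlinarith
    have hC : b*(54*ηv+78*s) ≤ a*(216*ξv+168*c) := by
      have hR : 0 ≤ a*(216*ξv+168*c) := by positivity
      rcases le_total (54*ηv+78*s) 0 with h | h
      · exact (mul_nonpos_of_nonneg_of_nonpos hb h).trans hR
      · have f1 := mul_le_mul_of_nonneg_right hl.le h
        have f2 := mul_le_mul_of_nonneg_left hB ha.le
        have : s*(b*(54*ηv+78*s)) ≤ s*(a*(216*ξv+168*c)) := by linarith
        exact le_of_mul_le_mul_left this hs
    have hpa : 0 < a^2 := by positivity
    have hpb : 0 ≤ b^2 := by positivity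
    nlinarith
  refine ⟨key, fun h => ?_⟩
  have := h (1/2) (by constructor <;> norm_num)
  linarith
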